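/- arXiv:2212.08193 — 2 statements merged into one kernel-verified Lean document; each statement's English description precedes it below -/
import Mathlib

section
/- If G is a finite twin-free cubic (3-regular) simple graph of order n ≥ 46, then G has an ERR:LD set S with |S| ≤ ⌈45n/46⌉. -/
/-!
Let `D` be a maximal set of vertices at pairwise distance greater than four; its complement is the
desired set. A ball of radius four in a cubic graph has at most `1 + 3 + 6 + 12 + 24 = 46`
vertices and these balls around `D` cover the graph, so `D` has at least `n / 46` elements.
Deleting so sparse a set costs each closed neighborhood at most one vertex. By regularity and
twin-freeness, each of two distinct vertices has a neighbor outside the closed neighborhood of the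
other, and the distances in `D` ensure that enough of these witnesses, or of the other neighbors,
survive the deletion.
-/

open scoped symmDiff

variable {V : Type*}

/-- The closed neighborhood `N[v]` of a vertex. -/
def closedNbhd (G : SimpleGraph V) (v : V) : Set V := insert v (G.neighborSet v)

/-- `S` is an error-correcting locating-dominating (ERR:LD) set: conditions (i)-(iv). -/
def IsErrLD (G : SimpleGraph V) (S : Set V) : Prop :=
  (∀ v : V, 3 ≤ (closedNbhd G v ∩ S).encard) ∧
  (∀ v ∈ S, ∀ u ∈ S, u ≠ v →
    1 ≤ ((((G.neighborSet v ∩ S) ∆ (G.neighborSet u ∩ S)) \ {v, u}).encard)) ∧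
  (∀ v ∉ S, ∀ u ∈ S,
    2 ≤ ((((G.neighborSet v ∩ S) ∆ (G.neighborSet u ∩ S)) \ {u}).encard)) ∧
  (∀ v ∉ S, ∀ u ∉ S, u ≠ v →
    3 ≤ (((G.neighborSet v ∩ S) ∆ (G.neighborSet u ∩ S)).encard))

/-- `G` is twin-free: no two distinct vertices `u, v` satisfy `N(u) = N(v)` or
`N[u] = N[v]`. -/
def TwinFree (G : SimpleGraph V) : Prop :=
  ∀ u v : V, u ≠ v →
    ¬(G.neighborSet u = G.neighborSet v ∨ closedNbhd G u = closedNbhd G v)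

/-- The number of vertices at distance at most `k` from a vertex of the `d`-regular tree: the
largest size of a ball of radius `k` in a graph of maximum degree `d`. -/
def mooreBound (d k : ℕ) : ℕ := 1 + d * ∑ i ∈ Finset.range k, (d - 1) ^ i

/-- A `k`-packing of `G`: a set of vertices at pairwise distance greater than `k`. The distance is
the extended one, so vertices in different components are infinitely far apart. -/
def IsPacking (G : SimpleGraph V) (k : ℕ) (D : Set V) : Prop :=
  D.Pairwise fun a b ↦ k < G.edist a b

theorem encard_biUnion_le_mul {ι α : Type*} {s : Set ι} {t : ι → Set α} {m : ℕ∞}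
    (h : ∀ i ∈ s, (t i).encard ≤ m) : (⋃ i ∈ s, t i).encard ≤ s.encard * m := by
  obtain hs | hs := s.finite_or_infinite
  · lift s to Finset ι using hs
    simpa [nsmul_eq_mul] using
      (s.set_encard_biUnion_le t).trans (s.sum_le_card_nsmul _ m (by simpa using h))
  · obtain rfl | hm := eq_or_ne m 0
    · simpa using h
    · simp [hs.encard_eq, ENat.top_mul hm]

section BallSize

variable {G : SimpleGraph V} {x y z : V} {r : ℕ∞}

theorem exists_adj_mem_ball (hy : y ∈ G.ball x (r + 1)) (hyx : y ≠ x) :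
    ∃ z ∈ G.ball x r, G.Adj y z := by
  obtain ⟨p, hp⟩ := G.exists_walk_of_edist_ne_top (ne_top_of_lt hy)
  cases p with
  | nil => exact absurd rfl hyx
  | cons hyz q =>
    refine ⟨_, (G.edist_le q).trans_lt ?_, hyz⟩
    rw [SimpleGraph.mem_ball, ← hp, SimpleGraph.Walk.length_cons, Nat.cast_succ] at hy
    exact lt_of_add_lt_add_right hy

theorem mem_ball_add_one_of_adj (hz : z ∈ G.ball x r) (hyz : G.Adj y z) :
    y ∈ G.ball x (r + 1) :=
  calc
    G.edist y x ≤ G.edist y z + G.edist z x := G.edist_triangle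
    _ = G.edist z x + 1 := by rw [SimpleGraph.edist_eq_one_iff_adj.2 hyz, add_comm]
    _ < r + 1 := (ENat.add_lt_add_iff_right ENat.one_ne_top).2 hz

theorem encard_neighborSet_sdiff_ball_le (hz : z ∈ G.ball x (r + 1)) (hzx : z ≠ x) :
    (G.neighborSet z \ G.ball x r).encard ≤ (G.neighborSet z).encard - 1 := by
  obtain ⟨w, hw, hzw⟩ := exists_adj_mem_ball hz hzx
  rw [← Set.encard_sdiff_singleton_of_mem (show w ∈ G.neighborSet z from hzw)]
  exact Set.encard_le_encard (Set.sdiff_subset_sdiff_right (Set.singleton_subset_iff.2 hw))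

theorem ball_sdiff_ball_subset_biUnion :
    G.ball x (r + 1 + 1) \ G.ball x (r + 1) ⊆
      ⋃ z ∈ G.ball x (r + 1) \ G.ball x r, G.neighborSet z \ G.ball x r := by
  rintro y ⟨hy, hy'⟩
  have hyx : y ≠ x := by
    rintro rfl
    exact hy' (SimpleGraph.mem_ball_self (by simp))
  obtain ⟨z, hz, hyz⟩ := exists_adj_mem_ball hy hyx
  refine Set.mem_biUnion ⟨hz, fun hz' ↦ hy' (mem_ball_add_one_of_adj hz' hyz)⟩
    ⟨hyz.symm, fun h ↦ hy' (SimpleGraph.ball_mono le_self_add h)⟩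

variable {d : ℕ}

theorem encard_ball_sdiff_ball_le (hdeg : ∀ v, (G.neighborSet v).encard ≤ d) (x : V) (k : ℕ) :
    (G.ball x (k + 1 + 1) \ G.ball x (k + 1)).encard ≤ d * (d - 1 : ℕ) ^ k := by
  induction k with
  | zero =>
    have hsub : G.ball x 2 \ G.ball x 1 ⊆ G.neighborSet x := by simp
    simpa [one_add_one_eq_two] using (Set.encard_le_encard hsub).trans (hdeg x)
  | succ k ih =>
    have hnbr : ∀ z ∈ G.ball x (k + 1 + 1) \ G.ball x (k + 1),
        (G.neighborSet z \ G.ball x (k + 1)).encard ≤ (d - 1 : ℕ) := by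
      rintro z ⟨hz, hz'⟩
      have hzx : z ≠ x := by
        rintro rfl
        exact hz' (SimpleGraph.mem_ball_self (by simp))
      grw [encard_neighborSet_sdiff_ball_le hz hzx, hdeg z]
      simp
    push_cast at ih hnbr ⊢
    grw [ball_sdiff_ball_subset_biUnion, encard_biUnion_le_mul hnbr, ih, pow_succ,
      mul_assoc]

theorem encard_ball_le_mooreBound (hdeg : ∀ v, (G.neighborSet v).encard ≤ d) (x : V) (k : ℕ) :
    (G.ball x (k + 1)).encard ≤ mooreBound d k := by
  induction k with
  | zero => simp [mooreBound]
  | succ k ih =>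
    calc
      (G.ball x ((k + 1 : ℕ) + 1)).encard
          ≤ (G.ball x (k + 1)).encard + (G.ball x (k + 1 + 1) \ G.ball x (k + 1)).encard := by
        rw [Nat.cast_succ, ← Set.encard_union_eq Set.disjoint_sdiff_right, Set.union_sdiff_self]
        exact Set.encard_le_encard Set.subset_union_right
      _ ≤ mooreBound d k + d * (d - 1 : ℕ) ^ k := add_le_add ih (encard_ball_sdiff_ball_le hdeg x k)
      _ = mooreBound d (k + 1) := by
        simp only [mooreBound, Finset.sum_range_succ]
        push_cast
        ring

end BallSize

section PrivateNeighbor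

variable {G : SimpleGraph V} {u v w : V} {S : Set V}

theorem encard_closedNbhd (G : SimpleGraph V) (v : V) :
    (closedNbhd G v).encard = (G.neighborSet v).encard + 1 :=
  Set.encard_insert_of_notMem (by simp)

theorem TwinFree.neighborSet_sdiff_closedNbhd_nonempty (htf : TwinFree G) (huv : u ≠ v)
    (hfin : (G.neighborSet u).Finite) (hle : (G.neighborSet v).encard ≤ (G.neighborSet u).encard) :
    (G.neighborSet u \ closedNbhd G v).Nonempty := by
  rw [Set.sdiff_nonempty]
  intro hsub
  by_cases hadj : G.Adj v u
  · refine htf u v huv (.inr ((hfin.insert u).eq_of_subset_of_encard_le ?_ ?_))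
    · exact Set.insert_subset (.inr hadj) hsub
    · rw [← closedNbhd, encard_closedNbhd, encard_closedNbhd]
      gcongr
  · refine htf u v huv (.inl (hfin.eq_of_subset_of_encard_le (fun a ha ↦ ?_) hle))
    exact (hsub ha).resolve_left fun hav ↦ hadj (hav ▸ ha).symm

theorem mem_symmDiff_sdiff_pair (hw : w ∈ G.neighborSet u \ closedNbhd G v) (hwS : w ∈ S) :
    w ∈ ((G.neighborSet u ∩ S) ∆ (G.neighborSet v ∩ S)) \ {u, v} := by
  obtain ⟨huw, hvw⟩ := hw
  refine ⟨.inl ⟨⟨huw, hwS⟩, fun h ↦ hvw (.inr h.1)⟩, ?_⟩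
  rintro (rfl | rfl)
  · exact G.irrefl huw
  · exact hvw (.inl rfl)

end PrivateNeighbor

namespace IsPacking

open SimpleGraph.Walk

variable {G : SimpleGraph V} {j k : ℕ} {D : Set V} {a b u v : V}

theorem mono (hD : IsPacking G k D) (hjk : j ≤ k) : IsPacking G j D :=
  Set.Pairwise.mono' (fun _ _ h ↦ (Nat.cast_le.2 hjk).trans_lt h) hD

theorem eq_of_walk (hD : IsPacking G k D) (ha : a ∈ D) (hb : b ∈ D) (p : G.Walk a b)
    (hp : p.length ≤ k) : a = b :=
  Set.Pairwise.eq hD ha hb (not_lt.2 ((G.edist_le p).trans (Nat.cast_le.2 hp)))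

theorem exists_maximal (G : SimpleGraph V) (k : ℕ) : ∃ D, Maximal (IsPacking G k) D :=
  zorn_subset {D | IsPacking G k D} fun c hc hchain ↦
    ⟨⋃₀ c, (Set.pairwise_sUnion hchain.directedOn).2 hc, fun _ ↦ Set.subset_sUnion_of_mem⟩

theorem exists_mem_ball_of_maximal (hD : Maximal (IsPacking G k) D) (v : V) :
    ∃ a ∈ D, v ∈ G.ball a (k + 1) := by
  by_contra! hfar
  have hlt : ∀ a ∈ D, k < G.edist v a := fun a ha ↦ by
    simpa [ENat.lt_add_one_iff] using hfar a ha
  have hins : IsPacking G k (insert v D) :=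
    hD.prop.insert fun a ha _ ↦ ⟨hlt a ha, G.edist_comm ▸ hlt a ha⟩
  have hv : v ∈ D := hD.le_of_ge hins (Set.subset_insert v D) (Set.mem_insert v D)
  exact hfar v hv (SimpleGraph.mem_ball_self (by simp))

theorem exists_card_le_mul_mooreBound {d : ℕ} (hdeg : ∀ v, (G.neighborSet v).encard ≤ d) (k : ℕ) :
    ∃ D, IsPacking G k D ∧ ENat.card V ≤ D.encard * mooreBound d k := by
  obtain ⟨D, hD⟩ := exists_maximal G k
  refine ⟨D, hD.prop, ?_⟩
  have hcover : Set.univ ⊆ ⋃ a ∈ D, G.ball a (k + 1) := fun v _ ↦ by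
    simpa using exists_mem_ball_of_maximal hD v
  rw [← Set.encard_univ]
  grw [hcover, encard_biUnion_le_mul fun a _ ↦ encard_ball_le_mooreBound hdeg a k]

theorem disjoint_neighborSet (hD : IsPacking G 1 D) (hv : v ∈ D) :
    Disjoint (G.neighborSet v) D :=
  Set.disjoint_left.2 fun _ hvw hw ↦
    G.ne_of_adj hvw (hD.eq_of_walk hv hw (cons hvw nil) le_rfl)

theorem disjoint_neighborSet_neighborSet (hD : IsPacking G 2 D) (hu : u ∈ D) (hv : v ∈ D)
    (huv : u ≠ v) : Disjoint (G.neighborSet u) (G.neighborSet v) :=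
  Set.disjoint_left.2 fun _ huw hvw ↦
    huv (hD.eq_of_walk hu hv (cons huw (cons (G.adj_symm hvw) nil)) le_rfl)

theorem subsingleton_closedNbhd_inter (hD : IsPacking G 2 D) (v : V) :
    (closedNbhd G v ∩ D).Subsingleton := by
  rintro a ⟨rfl | hva, ha⟩ b ⟨rfl | hvb, hb⟩
  · rfl
  · exact hD.eq_of_walk ha hb (cons hvb nil) one_le_two
  · exact hD.eq_of_walk ha hb (cons (G.adj_symm hva) nil) one_le_two
  · exact hD.eq_of_walk ha hb (cons (G.adj_symm hva) (cons hvb nil)) le_rfl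

theorem encard_neighborSet_le_closedNbhd_inter_compl (hD : IsPacking G 2 D) (v : V) :
    (G.neighborSet v).encard ≤ (closedNbhd G v ∩ Dᶜ).encard := by
  rw [← ENat.add_le_add_iff_right ENat.one_ne_top, ← encard_closedNbhd,
    ← Set.encard_sdiff_add_encard_inter (closedNbhd G v) D, Set.sdiff_eq]
  gcongr
  exact Set.encard_le_one_iff_subsingleton.2 (hD.subsingleton_closedNbhd_inter v)

theorem neighborSet_subset_symmDiff (hD : IsPacking G 1 D) (hv : v ∈ D)
    (hdisj : Disjoint (G.neighborSet v) (G.neighborSet u)) :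
    G.neighborSet v ⊆ (G.neighborSet v ∩ Dᶜ) ∆ (G.neighborSet u ∩ Dᶜ) := fun _ hw ↦
  .inl ⟨⟨hw, Set.disjoint_left.1 (hD.disjoint_neighborSet hv) hw⟩,
    fun h ↦ Set.disjoint_left.1 hdisj hw h.1⟩

theorem exists_notMem_sdiff_closedNbhd (hD : IsPacking G 4 D)
    (hdeg : 1 < (G.neighborSet u).encard) (ha : a ∈ G.neighborSet u \ closedNbhd G v)
    (hb : b ∈ G.neighborSet v \ closedNbhd G u) :
    ∃ w ∉ D, w ∈ G.neighborSet u \ closedNbhd G v ∨ w ∈ G.neighborSet v \ closedNbhd G u := by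
  by_cases haD : a ∈ D
  swap; · exact ⟨a, haD, .inl ha⟩
  by_cases hbD : b ∈ D
  swap; · exact ⟨b, hbD, .inr hb⟩
  obtain ⟨hua, hva⟩ := ha
  obtain ⟨hvb, -⟩ := hb
  have hab : a ≠ b := by
    rintro rfl
    exact hva (.inr hvb)
  -- Were `c` equal or adjacent to `v`, the walk `a, u, c, v, b` would join `a` and `b` within
  -- distance four.
  obtain ⟨c, huc, hca⟩ := Set.exists_ne_of_one_lt_encard hdeg a
  refine ⟨c, fun hcD ↦ ?_, .inl ⟨huc, ?_⟩⟩
  · exact hca (hD.eq_of_walk hcD haD (cons (G.adj_symm huc) (cons hua nil))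
      (show 2 ≤ 4 by simp))
  · rintro (rfl | hvc)
    · exact hab (hD.eq_of_walk haD hbD (cons (G.adj_symm hua) (cons huc (cons hvb nil)))
        (show 3 ≤ 4 by simp))
    · exact hab (hD.eq_of_walk haD hbD
        (cons (G.adj_symm hua) (cons huc (cons (G.adj_symm hvc) (cons hvb nil)))) le_rfl)

theorem two_le_encard_symmDiff_sdiff_singleton (hD : IsPacking G 3 D)
    (hdeg : 2 ≤ (G.neighborSet v).encard) (hv : v ∈ D)
    (ha : a ∈ G.neighborSet v \ closedNbhd G u) (hb : b ∈ G.neighborSet u \ closedNbhd G v) :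
    2 ≤ (((G.neighborSet v ∩ Dᶜ) ∆ (G.neighborSet u ∩ Dᶜ)) \ {u}).encard := by
  have hD₁ : IsPacking G 1 D := hD.mono (by simp)
  by_cases hbD : b ∈ D
  · obtain ⟨hub, hvb⟩ := hb
    have hne : v ≠ b := fun h ↦ hvb (.inl h.symm)
    have hdisj : Disjoint (G.neighborSet v) (G.neighborSet u) :=
      Set.disjoint_left.2 fun w hvw huw ↦
        hne (hD.eq_of_walk hv hbD (cons hvw (cons (G.adj_symm huw) (cons hub nil))) le_rfl)
    have hvu : u ∉ G.neighborSet v := fun hvu ↦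
      hne (hD.eq_of_walk hv hbD (cons hvu (cons hub nil)) (show 2 ≤ 3 by simp))
    exact hdeg.trans (Set.encard_le_encard
      (Set.subset_sdiff_singleton (hD₁.neighborSet_subset_symmDiff hv hdisj) hvu))
  · have haD : a ∉ D := Set.disjoint_left.1 (hD₁.disjoint_neighborSet hv) ha.1
    have hab : a ≠ b := by
      rintro rfl
      exact ha.2 (.inr hb.1)
    have haS := mem_symmDiff_sdiff_pair ha (S := Dᶜ) haD
    have hbS := mem_symmDiff_sdiff_pair hb (S := Dᶜ) hbD
    rw [symmDiff_comm] at hbS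
    rw [← Set.encard_pair hab]
    exact Set.encard_le_encard (Set.pair_subset
      ⟨haS.1, fun h ↦ haS.2 (.inr h)⟩ ⟨hbS.1, fun h ↦ hbS.2 (.inl h)⟩)

theorem isErrLD_compl {d : ℕ} (hD : IsPacking G 4 D) (htf : TwinFree G)
    (hreg : ∀ v, (G.neighborSet v).encard = d) (hd : 3 ≤ d) : IsErrLD G Dᶜ := by
  have hD₂ : IsPacking G 2 D := hD.mono (by simp)
  have hdeg : ∀ v, 3 ≤ (G.neighborSet v).encard := fun v ↦ by
    rw [hreg]
    exact_mod_cast hd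
  have hprivate : ∀ {u v}, u ≠ v → (G.neighborSet u \ closedNbhd G v).Nonempty := fun {u v} huv ↦
    htf.neighborSet_sdiff_closedNbhd_nonempty huv (Set.finite_of_encard_eq_coe (hreg u))
      (by rw [hreg, hreg])
  refine ⟨fun v ↦ ?_, fun v _ u _ huv ↦ ?_, fun v hv u hu ↦ ?_, fun v hv u hu huv ↦ ?_⟩
  · exact (hdeg v).trans (hD₂.encard_neighborSet_le_closedNbhd_inter_compl v)
  · obtain ⟨a, ha⟩ := hprivate huv.symm
    obtain ⟨b, hb⟩ := hprivate huv
    rw [Set.one_le_encard_iff_nonempty]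
    obtain ⟨w, hwD, hw | hw⟩ :=
      hD.exists_notMem_sdiff_closedNbhd (lt_of_lt_of_le (by norm_num) (hdeg v)) ha hb
    · exact ⟨w, mem_symmDiff_sdiff_pair hw hwD⟩
    · rw [symmDiff_comm, Set.pair_comm]
      exact ⟨w, mem_symmDiff_sdiff_pair hw hwD⟩
  · rw [Set.notMem_compl_iff] at hv
    have huv : u ≠ v := by
      rintro rfl
      exact hu hv
    obtain ⟨a, ha⟩ := hprivate huv.symm
    obtain ⟨b, hb⟩ := hprivate huv
    exact (hD.mono (by simp)).two_le_encard_symmDiff_sdiff_singleton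
      (le_trans (by norm_num) (hdeg v)) hv ha hb
  · rw [Set.notMem_compl_iff] at hv hu
    exact (hdeg v).trans (Set.encard_le_encard ((hD₂.mono one_le_two).neighborSet_subset_symmDiff hv
      (hD₂.disjoint_neighborSet_neighborSet hv hu huv.symm)))

end IsPacking

theorem errLD_cubic_upper_bound_general [Fintype V] (G : SimpleGraph V) {d : ℕ} (hd : 3 ≤ d)
    (hreg : ∀ v : V, (G.neighborSet v).ncard = d) (htf : TwinFree G) :
    ∃ S : Set V, IsErrLD G S ∧
      (S.ncard : ℚ) ≤ (1 - 1 / mooreBound d 4) * Fintype.card V := by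
  have hreg' : ∀ v, (G.neighborSet v).encard = d := fun v ↦ by
    rw [← hreg v, (Set.toFinite _).cast_ncard_eq]
  obtain ⟨D, hD, hcard⟩ := IsPacking.exists_card_le_mul_mooreBound (fun v ↦ (hreg' v).le) 4
  refine ⟨Dᶜ, hD.isErrLD_compl htf hreg' hd, ?_⟩
  have hDcard : (Fintype.card V : ℚ) ≤ D.ncard * mooreBound d 4 := by
    rw [ENat.card_eq_coe_fintype_card, ← D.toFinite.cast_ncard_eq] at hcard
    exact_mod_cast hcard
  have hcompl : (D.ncard + Dᶜ.ncard : ℚ) = Fintype.card V := by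
    rw [← Nat.card_eq_fintype_card]
    exact_mod_cast D.ncard_add_ncard_compl
  have hpos : (0 : ℚ) < mooreBound d 4 := by
    exact_mod_cast Nat.add_pos_left one_pos _
  have hdiv : (Fintype.card V : ℚ) / mooreBound d 4 ≤ D.ncard := (div_le_iff₀ hpos).2 hDcard
  linear_combination hdiv + hcompl

theorem errLD_cubic_upper_bound [Fintype V] (G : SimpleGraph V)
    (hcubic : ∀ v : V, (G.neighborSet v).ncard = 3) (htf : TwinFree G)
    (hn : 46 ≤ Fintype.card V) :
    ∃ S : Set V, IsErrLD G S ∧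
      (S.ncard : ℤ) ≤ ⌈(45 * (Fintype.card V : ℚ)) / 46⌉ := by
  obtain ⟨S, hS, hcard⟩ := errLD_cubic_upper_bound_general G le_rfl hcubic htf
  have hmoore : mooreBound 3 4 = 46 := by decide
  rw [hmoore] at hcard
  have hle : (S.ncard : ℚ) ≤ 45 * Fintype.card V / 46 := by linarith
  exact ⟨S, hS, by exact_mod_cast hle.trans (Int.le_ceil _)⟩
end

section
/- Every ERR:LD set of the infinite triangular grid TRI has density at least 3/7, and there exists an ERR:LD set of TRI whose density is at most 1/2. -/
open scoped symmDiff

variable {V : Type*}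

/-- The ball of radius `r` around `v₀` in graph distance. -/
def ballSet (G : SimpleGraph V) (v₀ : V) (r : ℕ) : Set V := {u | G.dist v₀ u ≤ r}

/-- The (upper) density of a vertex set `S`, relative to base vertex `v₀`. -/
noncomputable def density (G : SimpleGraph V) (S : Set V) (v₀ : V) : ℝ :=
  Filter.limsup (fun r : ℕ =>
    ((S ∩ ballSet G v₀ r).ncard : ℝ) / ((ballSet G v₀ r).ncard : ℝ)) Filter.atTop

/-- The infinite triangular grid on `ℤ × ℤ`. -/
def triGrid : SimpleGraph (ℤ × ℤ) :=
  SimpleGraph.fromRel (fun p q =>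
    (p.1 - q.1, p.2 - q.2) ∈ ({(1, 0), (0, 1), (1, 1)} : Set (ℤ × ℤ)))

/-!
Double counting the pairs `(v, s)` with `s ∈ N[v] ∩ S` compares `3 |B_r|` with `7 |S ∩ B_{r+1}|`,
since every closed neighborhood has seven vertices. The balls are the hexagons
`|a|, |b|, |a - b| ≤ r`, so they grow quadratically, `|B_{r+1}| / |B_r|` tends to `1`, and shifting
the radius by one does not affect the density.

For the upper bound take `S` to be the even columns: the dominoes `{s, s + (1, 0)}` for `s ∈ S`
are disjoint. A vertex off `S` sees two consecutive vertices of `S` in each of the two columns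
next to it, and a vertex of `S` sees the one above and the one below, which separates all pairs.
-/

open Filter Topology Finset

theorem two_le_encard {α : Type*} {s : Set α} {x y : α} (hx : x ∈ s) (hy : y ∈ s)
    (hxy : x ≠ y) : 2 ≤ s.encard := by
  rw [← Set.encard_pair hxy]
  exact Set.encard_le_encard (Set.pair_subset hx hy)

theorem three_le_encard {α : Type*} {s : Set α} {x y z : α} (hx : x ∈ s) (hy : y ∈ s)
    (hz : z ∈ s) (hxy : x ≠ y) (hxz : x ≠ z) (hyz : y ≠ z) : 3 ≤ s.encard := by
  rw [← Set.encard_eq_three.2 ⟨x, y, z, hxy, hxz, hyz, rfl⟩]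
  exact Set.encard_le_encard (Set.insert_subset hx (Set.pair_subset hy hz))

theorem dist_eq_of_adj_le_add_one_of_exists_adj_lt {G : SimpleGraph V} {v₀ : V} {f : V → ℕ}
    (h₀ : f v₀ = 0) (hadj : ∀ u v, G.Adj u v → f v ≤ f u + 1)
    (hdesc : ∀ v, v ≠ v₀ → ∃ u, G.Adj v u ∧ f u < f v) (v : V) :
    G.dist v₀ v = f v := by
  have exists_walk : ∀ n v, f v = n → ∃ p : G.Walk v v₀, p.length ≤ n := by
    intro n
    induction n using Nat.strong_induction_on with
    | _ n ih =>
      rintro v rfl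
      obtain rfl | hv := eq_or_ne v v₀
      · exact ⟨.nil, Nat.zero_le _⟩
      · obtain ⟨u, hvu, hlt⟩ := hdesc v hv
        obtain ⟨p, hp⟩ := ih _ hlt u rfl
        exact ⟨.cons hvu p, by rw [SimpleGraph.Walk.length_cons]; omega⟩
  have le_length : ∀ {u w} (p : G.Walk u w), f u ≤ f w + p.length := by
    intro u w p
    induction p with
    | nil => exact Nat.le_add_right _ _
    | cons huv p ih =>
      have hstep := hadj _ _ huv.symm
      rw [SimpleGraph.Walk.length_cons]
      omega
  obtain ⟨p, hp⟩ := exists_walk _ v rfl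
  obtain ⟨q, hq⟩ := p.reachable.exists_walk_length_eq_dist
  rw [G.dist_comm]
  have hle := le_length q
  exact le_antisymm ((SimpleGraph.dist_le p).trans hp) (by omega)

section Density

/-- The balls around `v₀` are finite and `|B_{r+1}| / |B_r|` tends to `1`, so that shifting the
radius by one does not affect densities. -/
structure HasSlowBallGrowth (G : SimpleGraph V) (v₀ : V) : Prop where
  finite (r : ℕ) : (ballSet G v₀ r).Finite
  tendsto_ratio :
    Tendsto (fun r ↦ ((ballSet G v₀ (r + 1)).ncard : ℝ) / (ballSet G v₀ r).ncard) atTop (𝓝 1)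

variable {G : SimpleGraph V} {S : Set V} {v₀ : V}

theorem ballSet_subset_ballSet_succ (r : ℕ) : ballSet G v₀ r ⊆ ballSet G v₀ (r + 1) :=
  fun _ hv ↦ Nat.le_succ_of_le hv

theorem closedNbhd_subset_ballSet_succ {v : V} {r : ℕ} (hv : v ∈ ballSet G v₀ r) :
    closedNbhd G v ⊆ ballSet G v₀ (r + 1) := by
  have hv : G.dist v₀ v ≤ r := hv
  rintro u (rfl | hu)
  · exact ballSet_subset_ballSet_succ r hv
  · have hu : G.Adj v u := hu
    have hdist := hu.diff_dist_adj (u := v₀)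
    change G.dist v₀ u ≤ r + 1
    omega

theorem closedNbhd_subset_ballSet_one (v : V) : closedNbhd G v ⊆ ballSet G v 1 :=
  closedNbhd_subset_ballSet_succ (r := 0) G.dist_self.le

theorem mem_closedNbhd_comm {u v : V} : u ∈ closedNbhd G v ↔ v ∈ closedNbhd G u := by
  simp only [closedNbhd, Set.mem_insert_iff, SimpleGraph.mem_neighborSet, eq_comm (a := u),
    G.adj_comm u]

theorem ncard_inter_ballSet_div_le_one {r : ℕ} (hfin : (ballSet G v₀ r).Finite) :
    ((S ∩ ballSet G v₀ r).ncard : ℝ) / (ballSet G v₀ r).ncard ≤ 1 :=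
  div_le_one_of_le₀ (mod_cast Set.ncard_le_ncard Set.inter_subset_right hfin) (Nat.cast_nonneg _)

theorem le_density_of_forall_le_ncard {c : ℝ} (hG : HasSlowBallGrowth G v₀)
    (hcount : ∀ r, c * (ballSet G v₀ r).ncard ≤ (S ∩ ballSet G v₀ (r + 1)).ncard) :
    c ≤ density G S v₀ := by
  have hlim : Tendsto
      (fun r ↦ c * (((ballSet G v₀ (r + 1)).ncard : ℝ) / (ballSet G v₀ r).ncard)⁻¹)
      atTop (𝓝 c) := by
    simpa using (hG.tendsto_ratio.inv₀ one_ne_zero).const_mul c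
  rw [density, ← limsup_nat_add _ 1, ← hlim.limsup_eq]
  refine limsup_le_limsup (.of_forall fun r ↦ ?_) hlim.isCoboundedUnder_le
    (isBoundedUnder_of ⟨1, fun r ↦ ncard_inter_ballSet_div_le_one (hG.finite (r + 1))⟩)
  beta_reduce
  rw [inv_div, ← mul_div_assoc]
  gcongr
  exact hcount r

theorem density_le_of_forall_ncard_le {c : ℝ} (hG : HasSlowBallGrowth G v₀)
    (hcount : ∀ r, (S ∩ ballSet G v₀ r).ncard ≤ c * (ballSet G v₀ (r + 1)).ncard) :
    density G S v₀ ≤ c := by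
  have hlim : Tendsto
      (fun r ↦ c * (((ballSet G v₀ (r + 1)).ncard : ℝ) / (ballSet G v₀ r).ncard))
      atTop (𝓝 c) := by
    simpa using hG.tendsto_ratio.const_mul c
  rw [density, ← hlim.limsup_eq]
  refine limsup_le_limsup (.of_forall fun r ↦ ?_)
    (isBoundedUnder_of ⟨0, fun r ↦ by positivity⟩).isCoboundedUnder_le hlim.isBoundedUnder_le
  beta_reduce
  rw [← mul_div_assoc]
  gcongr
  exact hcount r

theorem ncard_ballSet_mul_le_of_forall_le_encard_closedNbhd_inter {k d r : ℕ}
    (hfin : (ballSet G v₀ (r + 1)).Finite)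
    (hd : ∀ v, (closedNbhd G v).encard ≤ d) (hk : ∀ v, k ≤ (closedNbhd G v ∩ S).encard) :
    (ballSet G v₀ r).ncard * k ≤ (S ∩ ballSet G v₀ (r + 1)).ncard * d := by
  classical
  have hball : (ballSet G v₀ r).Finite := hfin.subset (ballSet_subset_ballSet_succ r)
  have hinter : (S ∩ ballSet G v₀ (r + 1)).Finite := hfin.subset Set.inter_subset_right
  rw [Set.ncard_eq_toFinset_card _ hball, Set.ncard_eq_toFinset_card _ hinter]
  refine card_mul_le_card_mul (fun v s ↦ s ∈ closedNbhd G v) (fun v hv ↦ ?_) fun s _ ↦ ?_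
  · rw [hball.mem_toFinset] at hv
    have hsub : closedNbhd G v ∩ S ⊆
        (hinter.toFinset.bipartiteAbove (fun v s ↦ s ∈ closedNbhd G v) v : Set V) := by
      rintro s ⟨hsv, hs⟩
      rw [mem_coe, mem_bipartiteAbove, hinter.mem_toFinset]
      exact ⟨⟨hs, closedNbhd_subset_ballSet_succ hv hsv⟩, hsv⟩
    have hle := (hk v).trans (Set.encard_le_encard hsub)
    rw [Set.encard_coe_eq_coe_finsetCard] at hle
    exact_mod_cast hle
  · have hsub : (hball.toFinset.bipartiteBelow (fun v s ↦ s ∈ closedNbhd G v) s : Set V) ⊆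
        closedNbhd G s := fun v hv ↦ mem_closedNbhd_comm.1 ((mem_bipartiteBelow _).1 hv).2
    have hle := (Set.encard_le_encard hsub).trans (hd s)
    rw [Set.encard_coe_eq_coe_finsetCard] at hle
    exact_mod_cast hle

theorem ncard_inter_ballSet_mul_le_of_pairwiseDisjoint {d r : ℕ} {T : V → Finset V}
    (hfin : (ballSet G v₀ (r + 1)).Finite) (hdisj : S.PairwiseDisjoint T)
    (hT : ∀ s ∈ S, (T s : Set V) ⊆ closedNbhd G s) (hd : ∀ s ∈ S, d ≤ #(T s)) :
    (S ∩ ballSet G v₀ r).ncard * d ≤ (ballSet G v₀ (r + 1)).ncard := by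
  classical
  have hinter : (S ∩ ballSet G v₀ r).Finite :=
    hfin.subset (Set.inter_subset_right.trans (ballSet_subset_ballSet_succ r))
  rw [Set.ncard_eq_toFinset_card _ hinter, Set.ncard_eq_toFinset_card _ hfin]
  calc #hinter.toFinset * d ≤ ∑ s ∈ hinter.toFinset, #(T s) :=
        card_nsmul_le_sum _ _ _ fun s hs ↦ hd s (hinter.mem_toFinset.1 hs).1
    _ = #(hinter.toFinset.biUnion T) :=
        (card_biUnion (hdisj.subset fun s hs ↦ (hinter.mem_toFinset.1 hs).1)).symm
    _ ≤ #hfin.toFinset := by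
        refine card_le_card (biUnion_subset.2 fun s hs u hu ↦ ?_)
        have hs := hinter.mem_toFinset.1 hs
        exact hfin.mem_toFinset.2 (closedNbhd_subset_ballSet_succ hs.2 (hT s hs.1 hu))

theorem div_le_density_of_forall_le_encard_closedNbhd_inter {k d : ℕ}
    (hG : HasSlowBallGrowth G v₀) (hd : ∀ v, (closedNbhd G v).encard ≤ d)
    (hk : ∀ v, k ≤ (closedNbhd G v ∩ S).encard) :
    (k : ℝ) / d ≤ density G S v₀ := by
  refine le_density_of_forall_le_ncard hG fun r ↦ ?_
  rw [div_mul_eq_mul_div, mul_comm]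
  refine div_le_of_le_mul₀ (Nat.cast_nonneg _) (Nat.cast_nonneg _) ?_
  exact_mod_cast
    ncard_ballSet_mul_le_of_forall_le_encard_closedNbhd_inter (hG.finite (r + 1)) hd hk

theorem density_le_one_div_of_pairwiseDisjoint {d : ℕ} {T : V → Finset V} (hd₀ : 0 < d)
    (hG : HasSlowBallGrowth G v₀)
    (hdisj : S.PairwiseDisjoint T) (hT : ∀ s ∈ S, (T s : Set V) ⊆ closedNbhd G s)
    (hd : ∀ s ∈ S, d ≤ #(T s)) :
    density G S v₀ ≤ 1 / d := by
  refine density_le_of_forall_ncard_le hG fun r ↦ ?_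
  rw [one_div_mul_eq_div, le_div_iff₀ (mod_cast hd₀)]
  exact_mod_cast
    ncard_inter_ballSet_mul_le_of_pairwiseDisjoint (hG.finite (r + 1)) hdisj hT hd

end Density

section TriangularGrid

/-- The norm on `ℤ × ℤ` whose unit sphere is the set of six steps of the triangular grid; it
computes the graph distance. -/
def triNorm (p : ℤ × ℤ) : ℕ := max (max p.1.natAbs p.2.natAbs) (p.1 - p.2).natAbs

theorem triNorm_le_iff {p : ℤ × ℤ} {n : ℕ} :
    triNorm p ≤ n ↔ p.1.natAbs ≤ n ∧ p.2.natAbs ≤ n ∧ (p.1 - p.2).natAbs ≤ n := by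
  simp only [triNorm, max_le_iff, and_assoc]

theorem triNorm_add_le (p q : ℤ × ℤ) : triNorm (p + q) ≤ triNorm p + triNorm q := by
  have hp := triNorm_le_iff.1 (le_refl (triNorm p))
  have hq := triNorm_le_iff.1 (le_refl (triNorm q))
  rw [triNorm_le_iff, Prod.fst_add, Prod.snd_add]
  omega

theorem triGrid_adj_iff {p q : ℤ × ℤ} : triGrid.Adj p q ↔ triNorm (q - p) = 1 := by
  obtain ⟨a, b⟩ := p
  obtain ⟨c, d⟩ := q
  simp only [triGrid, SimpleGraph.fromRel_adj, Set.mem_insert_iff, Set.mem_singleton_iff,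
    Prod.mk.injEq, ne_eq, triNorm, Prod.mk_sub_mk]
  omega

theorem exists_triNorm_eq_one_triNorm_sub_lt {p : ℤ × ℤ} (hp : p ≠ 0) :
    ∃ e, triNorm e = 1 ∧ triNorm (p - e) < triNorm p := by
  obtain ⟨a, b⟩ := p
  simp only [triNorm, Prod.exists, Prod.mk_sub_mk, ne_eq, Prod.mk_eq_zero] at hp ⊢
  rcases lt_trichotomy a 0 with ha | ha | ha <;> rcases lt_trichotomy b 0 with hb | hb | hb
  · exact ⟨-1, -1, by omega, by omega⟩
  · exact ⟨-1, 0, by omega, by omega⟩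
  · exact ⟨-1, 0, by omega, by omega⟩
  · exact ⟨0, -1, by omega, by omega⟩
  · exact absurd ⟨ha, hb⟩ hp
  · exact ⟨0, 1, by omega, by omega⟩
  · exact ⟨1, 0, by omega, by omega⟩
  · exact ⟨1, 0, by omega, by omega⟩
  · exact ⟨1, 1, by omega, by omega⟩

theorem triGrid_dist (p q : ℤ × ℤ) : triGrid.dist p q = triNorm (q - p) := by
  refine dist_eq_of_adj_le_add_one_of_exists_adj_lt (f := fun q ↦ triNorm (q - p)) ?_
    (fun u v huv ↦ ?_) (fun v hv ↦ ?_) q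
  · simp [triNorm]
  · calc triNorm (v - p) = triNorm (u - p + (v - u)) := by rw [add_comm, sub_add_sub_cancel]
      _ ≤ triNorm (u - p) + triNorm (v - u) := triNorm_add_le _ _
      _ = triNorm (u - p) + 1 := by rw [triGrid_adj_iff.1 huv]
  · obtain ⟨e, he, hlt⟩ := exists_triNorm_eq_one_triNorm_sub_lt (sub_ne_zero.2 hv)
    refine ⟨v - e, ?_, by rwa [sub_right_comm]⟩
    rw [SimpleGraph.adj_comm, triGrid_adj_iff, sub_sub_cancel, he]

/-- The hexagon `{p | triNorm p ≤ r}`, cut out of a bounding square to make it a finset. -/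
noncomputable def hexagon (r : ℕ) : Finset (ℤ × ℤ) :=
  {p ∈ Icc (-r : ℤ) r ×ˢ Icc (-r : ℤ) r | triNorm p ≤ r}

theorem mem_hexagon {r : ℕ} {p : ℤ × ℤ} : p ∈ hexagon r ↔ triNorm p ≤ r := by
  simp only [hexagon, mem_filter, mem_product, mem_Icc, triNorm_le_iff]
  omega

theorem card_filter_hexagon_fst_eq {r : ℕ} {a : ℤ} (ha : a ∈ Icc (-r : ℤ) r) :
    (#{p ∈ hexagon r | p.1 = a} : ℤ) = 2 * r + 1 - |a| := by
  rw [mem_Icc] at ha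
  have hcolumn : {p ∈ hexagon r | p.1 = a} =
      {a} ×ˢ Icc (max (-r : ℤ) (a - r)) (min (r : ℤ) (a + r)) := by
    ext ⟨x, y⟩
    simp only [mem_filter, mem_hexagon, triNorm_le_iff, mem_product, mem_singleton, mem_Icc]
    omega
  rw [hcolumn, card_product, card_singleton, one_mul, Int.card_Icc]
  grind

theorem card_hexagon (r : ℕ) : #(hexagon r) = 3 * r ^ 2 + 3 * r + 1 := by
  have hfst : ∀ p ∈ hexagon r, p.1 ∈ Icc (-r : ℤ) r := fun p hp ↦
    (mem_product.1 (mem_filter.1 hp).1).1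
  have hsum : (∑ a ∈ range (r + 1), (a : ℤ)) * 2 = r * (r + 1) := by
    have hgauss := sum_range_id_mul_two (r + 1)
    rw [Nat.add_sub_cancel, mul_comm (r + 1)] at hgauss
    zify at hgauss
    exact hgauss
  zify
  calc (#(hexagon r) : ℤ) = ∑ a ∈ Icc (-r : ℤ) r, (2 * r + 1 - |a|) := by
        rw [card_eq_sum_card_fiberwise hfst, Nat.cast_sum]
        exact sum_congr rfl fun a ha ↦ card_filter_hexagon_fst_eq ha
    _ = 2 • ∑ a ∈ range (r + 1), (2 * r + 1 - |(a : ℤ)|) - (2 * r + 1 - |0|) :=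
        sum_Icc_of_even_eq_range (f := fun a ↦ 2 * r + 1 - |a|) (fun a ↦ by simp only [abs_neg]) r
    _ = 3 * r ^ 2 + 3 * r + 1 := by
        simp only [Nat.abs_cast, abs_zero, sum_sub_distrib, sum_const, card_range, nsmul_eq_mul]
        push_cast
        linear_combination -hsum

theorem ballSet_triGrid_eq_image_hexagon (v : ℤ × ℤ) (r : ℕ) :
    ballSet triGrid v r = (v + ·) '' (hexagon r : Set (ℤ × ℤ)) := by
  ext u
  rw [Set.image_add_left, Set.mem_preimage, mem_coe, mem_hexagon, neg_add_eq_sub, ← triGrid_dist]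
  rfl

theorem finite_ballSet_triGrid (v : ℤ × ℤ) (r : ℕ) : (ballSet triGrid v r).Finite := by
  rw [ballSet_triGrid_eq_image_hexagon]
  exact (hexagon r).finite_toSet.image _

theorem ncard_ballSet_triGrid (v : ℤ × ℤ) (r : ℕ) :
    (ballSet triGrid v r).ncard = 3 * r ^ 2 + 3 * r + 1 := by
  rw [ballSet_triGrid_eq_image_hexagon, Set.ncard_image_of_injective _ (add_right_injective v),
    Set.ncard_coe_finset, card_hexagon]

theorem encard_closedNbhd_triGrid_le (v : ℤ × ℤ) : (closedNbhd triGrid v).encard ≤ 7 := by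
  refine (Set.encard_le_encard (closedNbhd_subset_ballSet_one v)).trans_eq ?_
  rw [← (finite_ballSet_triGrid v 1).cast_ncard_eq, ncard_ballSet_triGrid]
  rfl

theorem tendsto_ncard_ballSet_triGrid_ratio (v : ℤ × ℤ) :
    Tendsto (fun r ↦ ((ballSet triGrid v (r + 1)).ncard : ℝ) / (ballSet triGrid v r).ncard)
      atTop (𝓝 1) := by
  have hlim : Tendsto (fun r : ℕ ↦ 1 + 6 * (1 / ((r : ℝ) + 1))) atTop (𝓝 1) := by
    simpa using (tendsto_one_div_add_atTop_nhds_zero_nat (𝕜 := ℝ)).const_mul 6 |>.const_add 1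
  refine tendsto_of_tendsto_of_tendsto_of_le_of_le tendsto_const_nhds hlim ?_ ?_ <;> intro r
  · simp only [ncard_ballSet_triGrid]
    rw [one_le_div (by positivity)]
    gcongr <;> exact r.le_succ
  · simp only [ncard_ballSet_triGrid]
    push_cast
    rw [mul_one_div, one_add_div (by positivity), div_le_div_iff₀ (by positivity) (by positivity)]
    nlinarith [(r.cast_nonneg : (0 : ℝ) ≤ r)]

theorem hasSlowBallGrowth_triGrid (v : ℤ × ℤ) : HasSlowBallGrowth triGrid v :=
  ⟨finite_ballSet_triGrid v, tendsto_ncard_ballSet_triGrid_ratio v⟩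

end TriangularGrid

section EvenColumns

/-- The vertices with even first coordinate, an ERR:LD set of density at most `1 / 2`. -/
def evenColumns : Set (ℤ × ℤ) := {p | Even p.1}

theorem neighborSet_inter_evenColumns_of_mem {a b : ℤ} (ha : (a, b) ∈ evenColumns) :
    triGrid.neighborSet (a, b) ∩ evenColumns = {(a, b + 1), (a, b - 1)} := by
  ext ⟨x, y⟩
  simp only [evenColumns, Set.mem_ofPred_eq, Set.mem_inter_iff, SimpleGraph.mem_neighborSet,
    triGrid_adj_iff, triNorm, Prod.mk_sub_mk, Set.mem_insert_iff, Set.mem_singleton_iff,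
    Prod.mk.injEq, Int.even_iff] at ha ⊢
  omega

theorem neighborSet_inter_evenColumns_of_notMem {a b : ℤ} (ha : (a, b) ∉ evenColumns) :
    triGrid.neighborSet (a, b) ∩ evenColumns =
      {(a - 1, b - 1), (a - 1, b), (a + 1, b), (a + 1, b + 1)} := by
  ext ⟨x, y⟩
  simp only [evenColumns, Set.mem_ofPred_eq, Set.mem_inter_iff, SimpleGraph.mem_neighborSet,
    triGrid_adj_iff, triNorm, Prod.mk_sub_mk, Set.mem_insert_iff, Set.mem_singleton_iff,
    Prod.mk.injEq, Int.even_iff] at ha ⊢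
  omega

theorem three_le_encard_closedNbhd_inter_evenColumns (v : ℤ × ℤ) :
    3 ≤ (closedNbhd triGrid v ∩ evenColumns).encard := by
  obtain ⟨a, b⟩ := v
  by_cases hv : (a, b) ∈ evenColumns
  · rw [closedNbhd, Set.insert_inter_of_mem hv, neighborSet_inter_evenColumns_of_mem hv]
    apply three_le_encard (x := (a, b)) (y := (a, b + 1)) (z := (a, b - 1)) <;> grind
  · rw [closedNbhd, Set.insert_inter_of_notMem hv, neighborSet_inter_evenColumns_of_notMem hv]
    apply three_le_encard (x := (a - 1, b)) (y := (a + 1, b)) (z := (a + 1, b + 1)) <;> grind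

theorem one_le_encard_symmDiff_of_mem_evenColumns {v u : ℤ × ℤ} (hv : v ∈ evenColumns)
    (hu : u ∈ evenColumns) (hne : u ≠ v) :
    1 ≤ (((triGrid.neighborSet v ∩ evenColumns) ∆ (triGrid.neighborSet u ∩ evenColumns)) \
      {v, u}).encard := by
  obtain ⟨a, b⟩ := v
  obtain ⟨c, d⟩ := u
  rw [neighborSet_inter_evenColumns_of_mem hv, neighborSet_inter_evenColumns_of_mem hu,
    Set.one_le_encard_iff_nonempty]
  by_cases hbelow : c = a ∧ b < d
  · exact ⟨(a, b - 1), by grind⟩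
  · exact ⟨(a, b + 1), by grind⟩

theorem two_le_encard_symmDiff_of_notMem_of_mem_evenColumns {v u : ℤ × ℤ}
    (hv : v ∉ evenColumns) (hu : u ∈ evenColumns) :
    2 ≤ (((triGrid.neighborSet v ∩ evenColumns) ∆ (triGrid.neighborSet u ∩ evenColumns)) \
      {u}).encard := by
  obtain ⟨a, b⟩ := v
  obtain ⟨c, d⟩ := u
  rw [neighborSet_inter_evenColumns_of_notMem hv, neighborSet_inter_evenColumns_of_mem hu]
  by_cases hleft : c = a - 1
  · apply two_le_encard (x := (a + 1, b)) (y := (a + 1, b + 1)) <;> grind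
  · apply two_le_encard (x := (a - 1, b)) (y := (a - 1, b - 1)) <;> grind

theorem three_le_encard_symmDiff_of_notMem_evenColumns {v u : ℤ × ℤ}
    (hv : v ∉ evenColumns) (hu : u ∉ evenColumns) (hne : u ≠ v) :
    3 ≤ ((triGrid.neighborSet v ∩ evenColumns) ∆
      (triGrid.neighborSet u ∩ evenColumns)).encard := by
  wlog hlex : v.1 < u.1 ∨ v.1 = u.1 ∧ v.2 < u.2 generalizing v u
  · rw [symmDiff_comm]
    exact this hu hv hne.symm (by grind)
  obtain ⟨a, b⟩ := v
  obtain ⟨c, d⟩ := u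
  rw [neighborSet_inter_evenColumns_of_notMem hv, neighborSet_inter_evenColumns_of_notMem hu]
  obtain hac | ⟨hac, hbd⟩ : a < c ∨ a = c ∧ b < d := hlex
  · apply three_le_encard (x := (a - 1, b - 1)) (y := (a - 1, b)) (z := (c + 1, d)) <;> grind
  · apply three_le_encard (x := (a - 1, b - 1)) (y := (a + 1, b)) (z := (a + 1, d + 1)) <;> grind

theorem isErrLD_evenColumns : IsErrLD triGrid evenColumns :=
  ⟨three_le_encard_closedNbhd_inter_evenColumns,
    fun _ hv _ hu ↦ one_le_encard_symmDiff_of_mem_evenColumns hv hu,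
    fun _ hv _ hu ↦ two_le_encard_symmDiff_of_notMem_of_mem_evenColumns hv hu,
    fun _ hv _ hu ↦ three_le_encard_symmDiff_of_notMem_evenColumns hv hu⟩

theorem density_evenColumns_le (v₀ : ℤ × ℤ) : density triGrid evenColumns v₀ ≤ 1 / 2 := by
  refine mod_cast density_le_one_div_of_pairwiseDisjoint (d := 2)
    (T := fun s ↦ {s, (s.1 + 1, s.2)}) two_pos (hasSlowBallGrowth_triGrid v₀) ?_ ?_ ?_
  · rintro ⟨a, b⟩ ha ⟨c, d⟩ hc hne
    simp only [evenColumns, Set.mem_ofPred_eq, Int.even_iff] at ha hc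
    rw [Function.onFun, Finset.disjoint_left]
    grind
  · rintro ⟨a, b⟩ -
    have hadj : triGrid.Adj (a, b) (a + 1, b) := by simp [triGrid_adj_iff, triNorm]
    rw [coe_pair, Set.pair_subset_iff]
    exact ⟨Set.mem_insert _ _, Set.mem_insert_of_mem _ hadj⟩
  · rintro ⟨a, b⟩ -
    rw [card_pair (by simp)]

end EvenColumns

theorem errLD_density_tri_general :
    (∀ S : Set (ℤ × ℤ), (∀ v, 3 ≤ (closedNbhd triGrid v ∩ S).encard) →
      ∀ v₀, (3 : ℝ) / 7 ≤ density triGrid S v₀) ∧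
    (∃ S : Set (ℤ × ℤ), IsErrLD triGrid S ∧ ∀ v₀, density triGrid S v₀ ≤ (1 : ℝ) / 2) := by
  refine ⟨fun S hS v₀ ↦ ?_, evenColumns, isErrLD_evenColumns, density_evenColumns_le⟩
  exact mod_cast div_le_density_of_forall_le_encard_closedNbhd_inter (k := 3) (d := 7)
    (hasSlowBallGrowth_triGrid v₀) encard_closedNbhd_triGrid_le hS

theorem errLD_density_tri :
    (∀ S : Set (ℤ × ℤ), IsErrLD triGrid S →
      (3 : ℝ) / 7 ≤ density triGrid S ((0 : ℤ), (0 : ℤ))) ∧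
    (∃ S : Set (ℤ × ℤ), IsErrLD triGrid S ∧
      density triGrid S ((0 : ℤ), (0 : ℤ)) ≤ (1 : ℝ) / 2) :=
  ⟨fun S hS ↦ errLD_density_tri_general.1 S hS.1 (0, 0),
    errLD_density_tri_general.2.imp fun _ hS ↦ ⟨hS.1, hS.2 (0, 0)⟩⟩
end
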